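/- Suppose there exist a probability measure μ on S and a constant C > 0 such that P(s,a,s') ≤ C·μ(s') for all s,s',a, and set σ = γ·μ + (1−γ)·α. Assume the all-ones vector 1 lies in the column span of Φ, let G = {π ∈ Π_D : π greedy with respect to some v ∈ Ṽ}, let Π̃ satisfy G ⊆ Π̃ ⊆ Π_R, and let π̄ ∈ Π̃ satisfy ρ̃_S(π̄) ≥ ρ̃_S(π) for all π ∈ Π̃. Then for every v ∈ Ṽ: ρ* − ρ(π̄) ≤ (2C/(1−γ))·‖v − Lv‖_{1,σ}, where ‖x‖_{1,σ} = ∑_s σ(s)·|x(s)|. -/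

import Mathlib

open Matrix BigOperators

namespace DRADP

variable {S A K : Type*} [Fintype S] [Fintype A] [Fintype K] [DecidableEq S] [DecidableEq A]

/-- A randomized policy: nonnegative with rows summing to one. -/
def isPolicy (π : S → A → ℝ) : Prop :=
  (∀ s a, 0 ≤ π s a) ∧ ∀ s, ∑ a, π s a = 1

/-- The randomized policy corresponding to a deterministic policy `p : S → A`. -/
def detPol (p : S → A) : S → A → ℝ := fun s a => if a = p s then 1 else 0

/-- Transition matrix `P_π` of a policy. -/
noncomputable def Pmat (P : S → A → S → ℝ) (π : S → A → ℝ) : Matrix S S ℝ :=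
  Matrix.of fun s s' => ∑ a, P s a s' * π s a

/-- Reward vector `r_π` of a policy. -/
noncomputable def rvec (r : S → A → ℝ) (π : S → A → ℝ) : S → ℝ :=
  fun s => ∑ a, r s a * π s a

/-- State occupancy frequency `d_π = (1-γ)·∑_t γ^t (P_πᵀ)^t α`. -/
noncomputable def dOcc (P : S → A → S → ℝ) (α : S → ℝ) (γ : ℝ) (π : S → A → ℝ) : S → ℝ :=
  fun s => (1 - γ) * ∑' t : ℕ, γ ^ t * (((Pmat P π)ᵀ ^ t) *ᵥ α) s

/-- State-action occupancy frequency `u_π(s,a) = d_π(s)·π(s,a)`. -/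
noncomputable def uOcc (P : S → A → S → ℝ) (α : S → ℝ) (γ : ℝ) (π : S → A → ℝ) : S × A → ℝ :=
  fun w => dOcc P α γ π w.1 * π w.1 w.2

/-- Value function `v_π = ∑_t γ^t P_π^t r_π`. -/
noncomputable def vVal (P : S → A → S → ℝ) (r : S → A → ℝ) (γ : ℝ) (π : S → A → ℝ) : S → ℝ :=
  fun s => ∑' t : ℕ, γ ^ t * ((Pmat P π ^ t) *ᵥ rvec r π) s

/-- The return `ρ(π) = αᵀ v_π`. -/
noncomputable def ret (P : S → A → S → ℝ) (r : S → A → ℝ) (α : S → ℝ) (γ : ℝ)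
    (π : S → A → ℝ) : ℝ :=
  ∑ s, α s * vVal P r γ π s

/-- The matrix `A` with rows `A((s,a),·) = e_sᵀ − γ·P(s,a,·)`. -/
def Amat (P : S → A → S → ℝ) (γ : ℝ) : Matrix (S × A) S ℝ :=
  Matrix.of fun w s' => (if w.1 = s' then (1 : ℝ) else 0) - γ * P w.1 w.2 s'

/-- The vector `b(s,a) = r(s,a)`. -/
def bvec (r : S → A → ℝ) : S × A → ℝ := fun w => r w.1 w.2

/-- `U = {u : u ≥ 0, Aᵀu = (1−γ)·α}`. -/
def Uset (P : S → A → S → ℝ) (α : S → ℝ) (γ : ℝ) : Set (S × A → ℝ) :=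
  {u | (∀ w, 0 ≤ u w) ∧ (Amat P γ)ᵀ *ᵥ u = fun s => (1 - γ) * α s}

/-- The Bellman operator `L`. -/
noncomputable def bell (P : S → A → S → ℝ) (r : S → A → ℝ) (γ : ℝ) (v : S → ℝ) : S → ℝ :=
  fun s => ⨆ a : A, (r s a + γ * ∑ s', P s a s' * v s')

/-- A deterministic policy `p` is greedy w.r.t. `v`. -/
def isGreedy (P : S → A → S → ℝ) (r : S → A → ℝ) (γ : ℝ) (p : S → A) (v : S → ℝ) : Prop :=
  ∀ s a, r s a + γ * ∑ s', P s a s' * v s' ≤ r s (p s) + γ * ∑ s', P s (p s) s' * v s'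

/-- Approximate occupancy frequencies `Ũ(π)`. -/
def Utilde (P : S → A → S → ℝ) (α : S → ℝ) (γ : ℝ) (Φ : Matrix S K ℝ) (π : S → A → ℝ) :
    Set (S × A → ℝ) :=
  {u | (∀ w, 0 ≤ u w) ∧
    (Φᵀ *ᵥ ((Amat P γ)ᵀ *ᵥ u) = fun j => (1 - γ) * (Φᵀ *ᵥ α) j) ∧
    ∀ w, u w ≤ π w.1 w.2}

/-- The distributionally robust return estimate
`ρ̃(π) = sup_{v∈Ṽ} (αᵀv − sup_{u∈Ũ(π)} uᵀ(Av − b)/(1−γ))`. -/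
noncomputable def rhoTilde (P : S → A → S → ℝ) (r : S → A → ℝ) (α : S → ℝ) (γ : ℝ)
    (Φ : Matrix S K ℝ) (π : S → A → ℝ) : ℝ :=
  ⨆ x : K → ℝ, (∑ s, α s * (Φ *ᵥ x) s -
    sSup ((fun u : S × A → ℝ =>
      (∑ w, u w * ((Amat P γ *ᵥ (Φ *ᵥ x)) w - bvec r w)) / (1 - γ)) ''
      Utilde P α γ Φ π))

/-- The set `G` of deterministic policies greedy w.r.t. some representable value function. -/
def greedySet (P : S → A → S → ℝ) (r : S → A → ℝ) (γ : ℝ) (Φ : Matrix S K ℝ) :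
    Set (S → A → ℝ) :=
  {π | ∃ p : S → A, π = detPol p ∧ ∃ x : K → ℝ, isGreedy P r γ p (Φ *ᵥ x)}

end DRADP

open DRADP

namespace DRADP

/-- Smoothness-restricted approximate occupancy frequencies `Ũ_S(π)`. -/
def UtildeS {S A K : Type*} [Fintype S] [Fintype A] [Fintype K] [DecidableEq S]
    (P : S → A → S → ℝ) (α : S → ℝ) (γ : ℝ) (Φ : Matrix S K ℝ)
    (C : ℝ) (σ : S → ℝ) (π : S → A → ℝ) : Set (S × A → ℝ) :=
  {u | u ∈ Utilde P α γ Φ π ∧ ∀ s, ∑ a, u (s, a) ≤ C * σ s}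

/-- The smoothness-restricted robust return estimate `ρ̃_S(π)`. -/
noncomputable def rhoTildeS {S A K : Type*} [Fintype S] [Fintype A] [Fintype K] [DecidableEq S]
    (P : S → A → S → ℝ) (r : S → A → ℝ) (α : S → ℝ) (γ : ℝ) (Φ : Matrix S K ℝ)
    (C : ℝ) (σ : S → ℝ) (π : S → A → ℝ) : ℝ :=
  ⨆ x : K → ℝ, (∑ s, α s * (Φ *ᵥ x) s -
    sSup ((fun u : S × A → ℝ =>
      (∑ w, u w * ((Amat P γ *ᵥ (Φ *ᵥ x)) w - bvec r w)) / (1 - γ)) ''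
      UtildeS P α γ Φ C σ π))

end DRADP

/-!
For every policy `π`, the state occupancy `d_π = (1 - γ) α + γ d_π P_π` is at most `C σ`, because
`P_π(s, ·) ≤ C μ` and `C ≥ 1`. So the state-action occupancy `u_π`, which satisfies
`Aᵀu_π = (1 - γ) α`, lies in `Ũ_S(π)`, and `α ⬝ᵥ v - u_π ⬝ᵥ (A v - b) / (1 - γ) = ρ(π)` for every
`v`. Hence `ρ̃_S(π) ≤ ρ(π)`.

If `p` is greedy for `v ∈ Ṽ`, then `(A v - b)(s, p s) = (v - Lv)(s)`, and any `u ∈ Ũ_S(p)` is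
supported on the graph of `p` with state marginal at most `C σ`. The adversary in `ρ̃_S(p)` thus
lowers `α ⬝ᵥ v` by at most `C ‖v - Lv‖_{1,σ} / (1 - γ)`. Pairing `A (v* - v)` with the occupancy of
a `v*`-greedy policy gives the same bound for `α ⬝ᵥ v* - α ⬝ᵥ v`. The two errors add up since
`ρ̃_S(p) ≤ ρ̃_S(π̄) ≤ ρ(π̄)`.
-/

namespace DRADP

section RowStochastic

variable {n : Type*} [Fintype n] [DecidableEq n] {M : Matrix n n ℝ} {γ : ℝ}

theorem summable_smul_pow_of_mem_rowStochastic (hM : M ∈ rowStochastic ℝ n) (hγ : |γ| < 1) :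
    Summable fun t : ℕ => (γ • M) ^ t := by
  refine Pi.summable.2 fun i => Pi.summable.2 fun j =>
    (summable_geometric_of_lt_one (abs_nonneg γ) hγ).of_norm_bounded fun t => ?_
  have hMt : M ^ t ∈ rowStochastic ℝ n := pow_mem hM t
  rw [smul_pow, Matrix.smul_apply, norm_smul, norm_pow, Real.norm_eq_abs,
    Real.norm_of_nonneg (nonneg_of_mem_rowStochastic hMt)]
  exact mul_le_of_le_one_right (by positivity) (le_one_of_mem_rowStochastic hMt)

theorem tsum_pow_mul_pow_mulVec (h : Summable fun t : ℕ => (γ • M) ^ t) (x : n → ℝ) :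
    (fun i => ∑' t : ℕ, γ ^ t * (M ^ t *ᵥ x) i) = (∑' t : ℕ, (γ • M) ^ t) *ᵥ x := by
  have hx : HasSum (fun t : ℕ => (γ • M) ^ t *ᵥ x) ((∑' t : ℕ, (γ • M) ^ t) *ᵥ x) :=
    h.hasSum.map (mulVec.addMonoidHomLeft x) (continuous_id.matrix_mulVec continuous_const)
  funext i
  simpa [smul_pow, smul_mulVec] using (Pi.hasSum.1 hx i).tsum_eq

theorem one_sub_smul_mulVec_tsum (h : Summable fun t : ℕ => (γ • M) ^ t) (x : n → ℝ) :
    (1 - γ • M) *ᵥ (fun i => ∑' t : ℕ, γ ^ t * (M ^ t *ᵥ x) i) = x := by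
  rw [tsum_pow_mul_pow_mulVec h, mulVec_mulVec, h.one_sub_mul_tsum_pow, one_mulVec]

theorem one_le_of_mem_rowStochastic_of_le_mul [Nonempty n] {μ : n → ℝ} {C : ℝ}
    (hM : M ∈ rowStochastic ℝ n) (hμ : ∑ j, μ j = 1) (hMμ : ∀ i j, M i j ≤ C * μ j) : 1 ≤ C := by
  obtain ⟨i⟩ := ‹Nonempty n›
  calc 1 = ∑ j, M i j := (sum_row_of_mem_rowStochastic hM i).symm
    _ ≤ ∑ j, C * μ j := Finset.sum_le_sum fun j _ => hMμ i j
    _ = C := by rw [← Finset.mul_sum, hμ, mul_one]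

end RowStochastic

section WeightedNorm

variable {S : Type*} [Fintype S]

/-- The weighted norm `‖x‖_{1,σ}` in which Bellman residuals are measured. The weights are
arbitrary reals, so this is a norm only for `σ > 0`. -/
def weightedL1Norm (σ x : S → ℝ) : ℝ := ∑ s, σ s * |x s|

theorem weightedL1Norm_sub_comm (σ x y : S → ℝ) :
    weightedL1Norm σ (x - y) = weightedL1Norm σ (y - x) := by
  simp only [weightedL1Norm, Pi.sub_apply, abs_sub_comm]

theorem dotProduct_le_mul_weightedL1Norm {C : ℝ} {σ d x : S → ℝ} (hd : ∀ s, 0 ≤ d s)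
    (hdσ : ∀ s, d s ≤ C * σ s) : d ⬝ᵥ x ≤ C * weightedL1Norm σ x := by
  rw [weightedL1Norm, Finset.mul_sum]
  refine Finset.sum_le_sum fun s _ => ?_
  calc d s * x s ≤ d s * |x s| := mul_le_mul_of_nonneg_left (le_abs_self _) (hd s)
    _ ≤ C * σ s * |x s| := mul_le_mul_of_nonneg_right (hdσ s) (abs_nonneg _)
    _ = C * (σ s * |x s|) := mul_assoc _ _ _

end WeightedNorm

section Policy

variable {S A : Type*} [Fintype A] {P : S → A → S → ℝ} {π : S → A → ℝ}

theorem isPolicy_detPol [DecidableEq A] (p : S → A) : isPolicy (detPol p) :=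
  ⟨fun s a => by unfold detPol; split_ifs <;> norm_num, fun s => by simp [detPol]⟩

theorem Pmat_le {s s' : S} {c : ℝ} (hc : ∀ a, P s a s' ≤ c) (hπ : isPolicy π) :
    Pmat P π s s' ≤ c :=
  calc Pmat P π s s' = ∑ a, P s a s' * π s a := rfl
    _ ≤ ∑ a, c * π s a :=
      Finset.sum_le_sum fun a _ => mul_le_mul_of_nonneg_right (hc a) (hπ.1 s a)
    _ = c := by rw [← Finset.mul_sum, hπ.2, mul_one]

theorem Pmat_mem_rowStochastic [Fintype S] [DecidableEq S] (hP : ∀ s a, P s a ∈ stdSimplex ℝ S)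
    (hπ : isPolicy π) : Pmat P π ∈ rowStochastic ℝ S := by
  refine mem_rowStochastic_iff_sum.2
    ⟨fun s s' => Finset.sum_nonneg fun a _ => mul_nonneg ((hP s a).1 s') (hπ.1 s a), fun s => ?_⟩
  simp only [Pmat, of_apply]
  rw [Finset.sum_comm]
  simp only [← Finset.sum_mul, (hP s _).2, one_mul, hπ.2]

end Policy

section Occupancy

variable {S A : Type*} [Fintype S] [Fintype A] [DecidableEq S]
  {P : S → A → S → ℝ} {r : S → A → ℝ} {α μ : S → ℝ} {γ C : ℝ} {π : S → A → ℝ}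

theorem one_sub_smul_Pmat_mulVec_vVal (hP : ∀ s a, P s a ∈ stdSimplex ℝ S) (hγ : |γ| < 1)
    (hπ : isPolicy π) : (1 - γ • Pmat P π) *ᵥ vVal P r γ π = rvec r π :=
  one_sub_smul_mulVec_tsum
    (summable_smul_pow_of_mem_rowStochastic (Pmat_mem_rowStochastic hP hπ) hγ) _

theorem dOcc_vecMul_one_sub_smul_Pmat (hP : ∀ s a, P s a ∈ stdSimplex ℝ S) (hγ : |γ| < 1)
    (hπ : isPolicy π) : dOcc P α γ π ᵥ* (1 - γ • Pmat P π) = (1 - γ) • α := by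
  have hs : Summable fun t : ℕ => (γ • (Pmat P π)ᵀ) ^ t := by
    simpa only [transpose_pow, transpose_smul] using
      (summable_smul_pow_of_mem_rowStochastic
        (Pmat_mem_rowStochastic hP hπ) hγ).matrix_transpose
  have hd : dOcc P α γ π =
      (1 - γ) • fun s => ∑' t : ℕ, γ ^ t * (((Pmat P π)ᵀ ^ t) *ᵥ α) s := rfl
  rw [← mulVec_transpose, transpose_sub, transpose_one, transpose_smul, hd, mulVec_smul,
    one_sub_smul_mulVec_tsum hs]

theorem dOcc_nonneg (hP : ∀ s a, P s a ∈ stdSimplex ℝ S) (hα : ∀ s, 0 ≤ α s) (hγ0 : 0 ≤ γ)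
    (hγ1 : γ ≤ 1) (hπ : isPolicy π) (s : S) : 0 ≤ dOcc P α γ π s := by
  refine mul_nonneg (sub_nonneg.2 hγ1) (tsum_nonneg fun t => mul_nonneg (pow_nonneg hγ0 t) ?_)
  rw [← transpose_pow, mulVec_transpose]
  exact nonneg_vecMul_of_mem_rowStochastic (pow_mem (Pmat_mem_rowStochastic hP hπ) t) hα s

theorem dOcc_mem_stdSimplex (hP : ∀ s a, P s a ∈ stdSimplex ℝ S) (hα : α ∈ stdSimplex ℝ S)
    (hγ0 : 0 ≤ γ) (hγ1 : γ < 1) (hπ : isPolicy π) : dOcc P α γ π ∈ stdSimplex ℝ S := by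
  refine ⟨dOcc_nonneg hP hα.1 hγ0 hγ1.le hπ, ?_⟩
  have hγ : |γ| < 1 := (abs_of_nonneg hγ0).trans_lt hγ1
  have hones : (1 - γ • Pmat P π) *ᵥ 1 = (1 - γ) • (1 : S → ℝ) := by
    rw [sub_mulVec, one_mulVec, smul_mulVec, (Pmat_mem_rowStochastic hP hπ).2, sub_smul, one_smul]
  have hflow : (1 - γ) * (dOcc P α γ π ⬝ᵥ 1) = (1 - γ) * (α ⬝ᵥ 1) := by
    rw [← smul_eq_mul, ← dotProduct_smul, ← hones, dotProduct_mulVec,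
      dOcc_vecMul_one_sub_smul_Pmat hP hγ hπ, smul_dotProduct, smul_eq_mul]
  simpa only [dotProduct_one, hα.2] using mul_left_cancel₀ (sub_pos.2 hγ1).ne' hflow

theorem dOcc_le_of_concentration (hP : ∀ s a, P s a ∈ stdSimplex ℝ S)
    (hα : α ∈ stdSimplex ℝ S) (hμ : ∑ s, μ s = 1) (hγ0 : 0 ≤ γ) (hγ1 : γ < 1)
    (hconc : ∀ s a s', P s a s' ≤ C * μ s') (hπ : isPolicy π) (s : S) :
    dOcc P α γ π s ≤ C * (γ * μ s + (1 - γ) * α s) := by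
  have : Nonempty S := ⟨s⟩
  have hγ : |γ| < 1 := (abs_of_nonneg hγ0).trans_lt hγ1
  have hd := dOcc_mem_stdSimplex hP hα hγ0 hγ1 hπ
  have hPμ : ∀ i j, Pmat P π i j ≤ C * μ j := fun i j => Pmat_le (hconc i · j) hπ
  have hflow : dOcc P α γ π s - γ * (dOcc P α γ π ᵥ* Pmat P π) s = (1 - γ) * α s := by
    simpa [vecMul_sub, vecMul_smul] using congrFun (dOcc_vecMul_one_sub_smul_Pmat hP hγ hπ) s
  have hnext : (dOcc P α γ π ᵥ* Pmat P π) s ≤ C * μ s :=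
    calc ∑ i, dOcc P α γ π i * Pmat P π i s ≤ ∑ i, dOcc P α γ π i * (C * μ s) :=
          Finset.sum_le_sum fun i _ =>
            mul_le_mul_of_nonneg_left (hPμ i s) (hd.1 i)
      _ = C * μ s := by rw [← Finset.sum_mul, hd.2, one_mul]
  have hstart : (1 - γ) * α s ≤ C * ((1 - γ) * α s) :=
    le_mul_of_one_le_left (mul_nonneg (sub_pos.2 hγ1).le (hα.1 s))
      (one_le_of_mem_rowStochastic_of_le_mul (Pmat_mem_rowStochastic hP hπ) hμ hPμ)
  linarith [mul_le_mul_of_nonneg_left hnext hγ0]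

theorem sum_uOcc (hπ : isPolicy π) (s : S) : ∑ a, uOcc P α γ π (s, a) = dOcc P α γ π s := by
  simp only [uOcc, ← Finset.mul_sum, hπ.2, mul_one]

theorem uOcc_nonneg (hP : ∀ s a, P s a ∈ stdSimplex ℝ S) (hα : ∀ s, 0 ≤ α s) (hγ0 : 0 ≤ γ)
    (hγ1 : γ ≤ 1) (hπ : isPolicy π) (w : S × A) : 0 ≤ uOcc P α γ π w :=
  mul_nonneg (dOcc_nonneg hP hα hγ0 hγ1 hπ _) (hπ.1 _ _)

theorem uOcc_le (hP : ∀ s a, P s a ∈ stdSimplex ℝ S) (hα : α ∈ stdSimplex ℝ S)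
    (hγ0 : 0 ≤ γ) (hγ1 : γ < 1) (hπ : isPolicy π) (w : S × A) :
    uOcc P α γ π w ≤ π w.1 w.2 :=
  mul_le_of_le_one_left (hπ.1 _ _)
    (mem_Icc_of_mem_stdSimplex (dOcc_mem_stdSimplex hP hα hγ0 hγ1 hπ) _).2

theorem uOcc_vecMul_Amat (hπ : isPolicy π) :
    uOcc P α γ π ᵥ* Amat P γ = dOcc P α γ π ᵥ* (1 - γ • Pmat P π) := by
  funext s'
  simp only [vecMul, dotProduct, Fintype.sum_prod_type]
  refine Finset.sum_congr rfl fun s _ => ?_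
  have hrow : ∑ a, π s a * Amat P γ (s, a) s' = (1 - γ • Pmat P π) s s' := by
    calc ∑ a, π s a * Amat P γ (s, a) s'
        = (∑ a, π s a) * (1 : Matrix S S ℝ) s s' - γ * Pmat P π s s' := by
          simp only [Amat, Pmat, of_apply, one_apply, Finset.sum_mul, Finset.mul_sum,
            ← Finset.sum_sub_distrib]
          exact Finset.sum_congr rfl fun a _ => by ring
      _ = (1 - γ • Pmat P π) s s' := by rw [hπ.2, one_mul]; rfl
  simp only [← hrow, uOcc, mul_assoc, Finset.mul_sum]

theorem uOcc_mem_Uset (hP : ∀ s a, P s a ∈ stdSimplex ℝ S) (hα : ∀ s, 0 ≤ α s)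
    (hγ0 : 0 ≤ γ) (hγ1 : γ < 1) (hπ : isPolicy π) : uOcc P α γ π ∈ Uset P α γ := by
  refine ⟨uOcc_nonneg hP hα hγ0 hγ1.le hπ, ?_⟩
  rw [mulVec_transpose, uOcc_vecMul_Amat hπ,
    dOcc_vecMul_one_sub_smul_Pmat hP ((abs_of_nonneg hγ0).trans_lt hγ1) hπ]
  rfl

theorem dotProduct_Amat_mulVec_of_mem_Uset {u : S × A → ℝ} (hu : u ∈ Uset P α γ) (v : S → ℝ) :
    u ⬝ᵥ (Amat P γ *ᵥ v) = (1 - γ) * (α ⬝ᵥ v) := by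
  have hflow : u ᵥ* Amat P γ = (1 - γ) • α := (mulVec_transpose _ _).symm.trans hu.2
  rw [dotProduct_mulVec, hflow, smul_dotProduct, smul_eq_mul]

theorem uOcc_dotProduct_bvec (hP : ∀ s a, P s a ∈ stdSimplex ℝ S) (hγ : |γ| < 1)
    (hπ : isPolicy π) : uOcc P α γ π ⬝ᵥ bvec r = (1 - γ) * ret P r α γ π := by
  have hmarginal : uOcc P α γ π ⬝ᵥ bvec r = dOcc P α γ π ⬝ᵥ rvec r π := by
    simp only [dotProduct, Fintype.sum_prod_type, uOcc, bvec, rvec, Finset.mul_sum]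
    exact Finset.sum_congr rfl fun s _ => Finset.sum_congr rfl fun a _ => by ring
  rw [hmarginal, ← one_sub_smul_Pmat_mulVec_vVal hP hγ hπ, dotProduct_mulVec,
    dOcc_vecMul_one_sub_smul_Pmat hP hγ hπ, smul_dotProduct]
  rfl

end Occupancy

section Bellman

variable {S A : Type*} [Fintype S] {P : S → A → S → ℝ} {r : S → A → ℝ} {γ : ℝ} {v : S → ℝ}
  {p : S → A}

theorem exists_isGreedy [Finite A] [Nonempty A] (P : S → A → S → ℝ) (r : S → A → ℝ) (γ : ℝ)
    (v : S → ℝ) : ∃ p : S → A, isGreedy P r γ p v := by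
  choose p hp using fun s => Finite.exists_max fun a => r s a + γ * ∑ s', P s a s' * v s'
  exact ⟨p, hp⟩

theorem le_bell [Finite A] (P : S → A → S → ℝ) (r : S → A → ℝ) (γ : ℝ) (v : S → ℝ) (s : S)
    (a : A) : r s a + γ * ∑ s', P s a s' * v s' ≤ bell P r γ v s :=
  le_ciSup (f := fun a => r s a + γ * ∑ s', P s a s' * v s') (Set.finite_range _).bddAbove a

theorem bell_eq_of_isGreedy (hp : isGreedy P r γ p v) (s : S) :
    bell P r γ v s = r s (p s) + γ * ∑ s', P s (p s) s' * v s' :=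
  (show IsGreatest (Set.range fun a => r s a + γ * ∑ s', P s a s' * v s') _ from
    ⟨⟨p s, rfl⟩, Set.forall_mem_range.2 (hp s)⟩).csSup_eq

variable [DecidableEq S]

theorem Amat_mulVec_sub_bvec_apply (P : S → A → S → ℝ) (r : S → A → ℝ) (γ : ℝ) (v : S → ℝ)
    (s : S) (a : A) :
    (Amat P γ *ᵥ v - bvec r) (s, a) = v s - (r s a + γ * ∑ s', P s a s' * v s') := by
  have hA : (Amat P γ *ᵥ v) (s, a) = v s - γ * ∑ s', P s a s' * v s' := by
    simp [Amat, mulVec, dotProduct, sub_mul, Finset.mul_sum, mul_assoc]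
  rw [Pi.sub_apply, hA, bvec]
  ring

theorem sub_bell_le_Amat_mulVec_sub_bvec [Finite A] (P : S → A → S → ℝ) (r : S → A → ℝ) (γ : ℝ)
    (v : S → ℝ) (s : S) (a : A) : (v - bell P r γ v) s ≤ (Amat P γ *ᵥ v - bvec r) (s, a) := by
  rw [Amat_mulVec_sub_bvec_apply]
  exact sub_le_sub_left (le_bell P r γ v s a) _

theorem Amat_mulVec_sub_bvec_of_isGreedy (hp : isGreedy P r γ p v) (s : S) :
    (Amat P γ *ᵥ v - bvec r) (s, p s) = (v - bell P r γ v) s := by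
  rw [Amat_mulVec_sub_bvec_apply, Pi.sub_apply, bell_eq_of_isGreedy hp]

end Bellman

section Deterministic

variable {S A : Type*} [Fintype S] [Fintype A] [DecidableEq A] {p : S → A} {u : S × A → ℝ}

theorem dotProduct_eq_of_le_detPol (hu : ∀ w, 0 ≤ u w) (hup : ∀ w, u w ≤ detPol p w.1 w.2)
    (g : S × A → ℝ) : u ⬝ᵥ g = (fun s => ∑ a, u (s, a)) ⬝ᵥ fun s => g (s, p s) := by
  simp only [dotProduct, Fintype.sum_prod_type, Finset.sum_mul]
  refine Finset.sum_congr rfl fun s _ => Finset.sum_congr rfl fun a _ => ?_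
  rcases eq_or_ne a (p s) with rfl | ha
  · rfl
  · have hzero : u (s, a) = 0 :=
      le_antisymm ((hup (s, a)).trans_eq (if_neg ha)) (hu (s, a))
    rw [hzero, zero_mul, zero_mul]

theorem dotProduct_le_mul_weightedL1Norm_of_le_detPol {C : ℝ} {σ x : S → ℝ} {g : S × A → ℝ}
    (hu : ∀ w, 0 ≤ u w) (hup : ∀ w, u w ≤ detPol p w.1 w.2)
    (huσ : ∀ s, ∑ a, u (s, a) ≤ C * σ s) (hg : ∀ s, g (s, p s) ≤ x s) :
    u ⬝ᵥ g ≤ C * weightedL1Norm σ x := by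
  have hmarginal : ∀ s, 0 ≤ ∑ a, u (s, a) := fun s => Finset.sum_nonneg fun a _ => hu (s, a)
  rw [dotProduct_eq_of_le_detPol hu hup]
  exact (dotProduct_le_dotProduct_of_nonneg_left hg hmarginal).trans
    (dotProduct_le_mul_weightedL1Norm hmarginal huσ)

end Deterministic

section RobustReturn

variable {S A K : Type*} [Fintype S] [Fintype A] [Fintype K] [DecidableEq S]
  {P : S → A → S → ℝ} {r : S → A → ℝ} {α σ v : S → ℝ} {γ C : ℝ} {Φ : Matrix S K ℝ}
  {π : S → A → ℝ} {p : S → A}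

/-- The objective `αᵀv − sup_{u∈U} uᵀ(Av − b)/(1−γ)` of the robust return estimate at a fixed
value function `v`; `ρ̃_S(π)` is its supremum over `v ∈ Ṽ` for `U = Ũ_S(π)`. -/
noncomputable def robustValue (P : S → A → S → ℝ) (r : S → A → ℝ) (α : S → ℝ) (γ : ℝ)
    (U : Set (S × A → ℝ)) (v : S → ℝ) : ℝ :=
  α ⬝ᵥ v - sSup ((fun u => u ⬝ᵥ (Amat P γ *ᵥ v - bvec r) / (1 - γ)) '' U)

theorem rhoTildeS_eq_iSup_robustValue :
    rhoTildeS P r α γ Φ C σ π = ⨆ x, robustValue P r α γ (UtildeS P α γ Φ C σ π) (Φ *ᵥ x) :=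
  rfl

theorem uOcc_mem_UtildeS (hP : ∀ s a, P s a ∈ stdSimplex ℝ S) (hα : α ∈ stdSimplex ℝ S)
    (hγ0 : 0 ≤ γ) (hγ1 : γ < 1) (hπ : isPolicy π) (hσ : ∀ s, dOcc P α γ π s ≤ C * σ s) :
    uOcc P α γ π ∈ UtildeS P α γ Φ C σ π := by
  refine ⟨⟨uOcc_nonneg hP hα.1 hγ0 hγ1.le hπ, ?_, uOcc_le hP hα hγ0 hγ1 hπ⟩,
    fun s => (sum_uOcc hπ s).trans_le (hσ s)⟩
  rw [(uOcc_mem_Uset hP hα.1 hγ0 hγ1 hπ).2]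
  exact mulVec_smul _ (1 - γ) α

theorem bddAbove_image_UtildeS {f : (S × A → ℝ) → ℝ} (hf : Continuous f) :
    BddAbove (f '' UtildeS P α γ Φ C σ π) := by
  have hbox : UtildeS P α γ Φ C σ π ⊆ Set.Icc 0 fun w => π w.1 w.2 :=
    fun _ hu => ⟨hu.1.1, hu.1.2.2⟩
  exact (isCompact_Icc.bddAbove_image hf.continuousOn).mono (Set.image_mono hbox)

theorem robustValue_le_ret (hP : ∀ s a, P s a ∈ stdSimplex ℝ S) (hα : α ∈ stdSimplex ℝ S)
    (hγ0 : 0 ≤ γ) (hγ1 : γ < 1) (hπ : isPolicy π) (hσ : ∀ s, dOcc P α γ π s ≤ C * σ s)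
    (v : S → ℝ) : robustValue P r α γ (UtildeS P α γ Φ C σ π) v ≤ ret P r α γ π := by
  have hvalue : uOcc P α γ π ⬝ᵥ (Amat P γ *ᵥ v - bvec r) / (1 - γ)
      = α ⬝ᵥ v - ret P r α γ π := by
    rw [dotProduct_sub,
      dotProduct_Amat_mulVec_of_mem_Uset (uOcc_mem_Uset hP hα.1 hγ0 hγ1 hπ),
      uOcc_dotProduct_bvec hP ((abs_of_nonneg hγ0).trans_lt hγ1) hπ, ← mul_sub,
      mul_div_cancel_left₀ _ (sub_pos.2 hγ1).ne']
  have hbdd := bddAbove_image_UtildeS (P := P) (α := α) (γ := γ) (Φ := Φ) (C := C) (σ := σ)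
    (π := π) (f := fun u => u ⬝ᵥ (Amat P γ *ᵥ v - bvec r) / (1 - γ)) (by fun_prop)
  have hsup := le_csSup hbdd
    (Set.mem_image_of_mem _ (uOcc_mem_UtildeS (Φ := Φ) hP hα hγ0 hγ1 hπ hσ))
  exact sub_le_comm.1 (hvalue.symm.trans_le hsup)

theorem rhoTildeS_le_ret (hP : ∀ s a, P s a ∈ stdSimplex ℝ S) (hα : α ∈ stdSimplex ℝ S)
    (hγ0 : 0 ≤ γ) (hγ1 : γ < 1) (hπ : isPolicy π) (hσ : ∀ s, dOcc P α γ π s ≤ C * σ s) :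
    rhoTildeS P r α γ Φ C σ π ≤ ret P r α γ π :=
  ciSup_le fun x => robustValue_le_ret hP hα hγ0 hγ1 hπ hσ (Φ *ᵥ x)

theorem robustValue_le_rhoTildeS (hP : ∀ s a, P s a ∈ stdSimplex ℝ S)
    (hα : α ∈ stdSimplex ℝ S) (hγ0 : 0 ≤ γ) (hγ1 : γ < 1) (hπ : isPolicy π)
    (hσ : ∀ s, dOcc P α γ π s ≤ C * σ s) (x : K → ℝ) :
    robustValue P r α γ (UtildeS P α γ Φ C σ π) (Φ *ᵥ x) ≤ rhoTildeS P r α γ Φ C σ π := by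
  rw [rhoTildeS_eq_iSup_robustValue]
  exact le_ciSup (f := fun x => robustValue P r α γ (UtildeS P α γ Φ C σ π) (Φ *ᵥ x))
    ⟨_, Set.forall_mem_range.2 fun y => robustValue_le_ret hP hα hγ0 hγ1 hπ hσ (Φ *ᵥ y)⟩ x

variable [DecidableEq A]

theorem le_robustValue_of_isGreedy (hγ1 : γ < 1) (hp : isGreedy P r γ p v)
    (hne : (UtildeS P α γ Φ C σ (detPol p)).Nonempty) :
    α ⬝ᵥ v - C * weightedL1Norm σ (v - bell P r γ v) / (1 - γ)
      ≤ robustValue P r α γ (UtildeS P α γ Φ C σ (detPol p)) v := by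
  refine sub_le_sub_left (csSup_le (hne.image _) ?_) _
  rintro _ ⟨u, ⟨⟨hu0, -, hup⟩, huσ⟩, rfl⟩
  exact div_le_div_of_nonneg_right
    (dotProduct_le_mul_weightedL1Norm_of_le_detPol hu0 hup huσ
      fun s => (Amat_mulVec_sub_bvec_of_isGreedy hp s).le) (sub_pos.2 hγ1).le

theorem le_rhoTildeS_of_isGreedy (hP : ∀ s a, P s a ∈ stdSimplex ℝ S)
    (hα : α ∈ stdSimplex ℝ S) (hγ0 : 0 ≤ γ) (hγ1 : γ < 1) {x : K → ℝ}
    (hp : isGreedy P r γ p (Φ *ᵥ x)) (hσ : ∀ s, dOcc P α γ (detPol p) s ≤ C * σ s) :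
    α ⬝ᵥ (Φ *ᵥ x) - C * weightedL1Norm σ (Φ *ᵥ x - bell P r γ (Φ *ᵥ x)) / (1 - γ)
      ≤ rhoTildeS P r α γ Φ C σ (detPol p) :=
  (le_robustValue_of_isGreedy hγ1 hp
    ⟨_, uOcc_mem_UtildeS hP hα hγ0 hγ1 (isPolicy_detPol p) hσ⟩).trans
    (robustValue_le_rhoTildeS hP hα hγ0 hγ1 (isPolicy_detPol p) hσ x)

end RobustReturn

theorem dotProduct_sub_le_of_le_bell {S A : Type*} [Fintype S] [Fintype A] [DecidableEq S]
    [DecidableEq A] {P : S → A → S → ℝ} {r : S → A → ℝ} {α σ w : S → ℝ} {γ C : ℝ} {p : S → A}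
    (hP : ∀ s a, P s a ∈ stdSimplex ℝ S) (hα : α ∈ stdSimplex ℝ S) (hγ0 : 0 ≤ γ) (hγ1 : γ < 1)
    (hw : w ≤ bell P r γ w) (hp : isGreedy P r γ p w)
    (hσ : ∀ s, dOcc P α γ (detPol p) s ≤ C * σ s) (v : S → ℝ) :
    α ⬝ᵥ w - α ⬝ᵥ v ≤ C * weightedL1Norm σ (v - bell P r γ v) / (1 - γ) := by
  have hπ : isPolicy (detPol p) := isPolicy_detPol p
  have hresidual : ∀ s, (Amat P γ *ᵥ (w - v)) (s, p s) ≤ (bell P r γ v - v) s := fun s => by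
    have hw_residual : (Amat P γ *ᵥ w - bvec r) (s, p s) ≤ 0 :=
      (Amat_mulVec_sub_bvec_of_isGreedy hp s).trans_le (sub_nonpos.2 (hw s))
    have hv_residual := sub_bell_le_Amat_mulVec_sub_bvec P r γ v s (p s)
    simp only [mulVec_sub, Pi.sub_apply] at hw_residual hv_residual ⊢
    linarith
  rw [le_div_iff₀' (sub_pos.2 hγ1), ← dotProduct_sub,
    ← dotProduct_Amat_mulVec_of_mem_Uset (uOcc_mem_Uset hP hα.1 hγ0 hγ1 hπ),
    weightedL1Norm_sub_comm]
  exact dotProduct_le_mul_weightedL1Norm_of_le_detPol (uOcc_nonneg hP hα.1 hγ0 hγ1.le hπ)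
    (uOcc_le hP hα hγ0 hγ1 hπ) (fun s => (sum_uOcc hπ s).trans_le (hσ s)) hresidual

end DRADP

theorem dradp_loss_bound_smooth_general {S A K : Type*} [Fintype S] [Fintype A] [Fintype K]
    [Nonempty A] [DecidableEq S] [DecidableEq A]
    (P : S → A → S → ℝ) (r : S → A → ℝ) (α : S → ℝ) (γ : ℝ) (Φ : Matrix S K ℝ)
    (hP : ∀ s a, P s a ∈ stdSimplex ℝ S) (hα : α ∈ stdSimplex ℝ S) (hγ0 : 0 ≤ γ) (hγ1 : γ < 1)
    (C : ℝ) (σ : S → ℝ) (hσ : ∀ π, isPolicy π → ∀ s, dOcc P α γ π s ≤ C * σ s)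
    (vstar : S → ℝ) (hvstar : bell P r γ vstar = vstar)
    (πb : S → A → ℝ) (hπb : isPolicy πb)
    (hopt : ∀ π ∈ greedySet P r γ Φ, rhoTildeS P r α γ Φ C σ π ≤ rhoTildeS P r α γ Φ C σ πb)
    (x : K → ℝ) :
    α ⬝ᵥ vstar - ret P r α γ πb
      ≤ 2 * C / (1 - γ) * weightedL1Norm σ (Φ *ᵥ x - bell P r γ (Φ *ᵥ x)) := by
  obtain ⟨p, hp⟩ := exists_isGreedy P r γ (Φ *ᵥ x)
  obtain ⟨q, hq⟩ := exists_isGreedy P r γ vstar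
  have hreturn := rhoTildeS_le_ret (r := r) (Φ := Φ) hP hα hγ0 hγ1 hπb (hσ πb hπb)
  have hchoice := hopt (detPol p) ⟨p, rfl, x, hp⟩
  have hgreedy := le_rhoTildeS_of_isGreedy hP hα hγ0 hγ1 hp (hσ _ (isPolicy_detPol p))
  have hoptimal := dotProduct_sub_le_of_le_bell hP hα hγ0 hγ1 hvstar.ge hq
    (hσ _ (isPolicy_detPol q)) (Φ *ᵥ x)
  calc α ⬝ᵥ vstar - ret P r α γ πb
      ≤ C * weightedL1Norm σ (Φ *ᵥ x - bell P r γ (Φ *ᵥ x)) / (1 - γ)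
        + C * weightedL1Norm σ (Φ *ᵥ x - bell P r γ (Φ *ᵥ x)) / (1 - γ) := by linarith
    _ = 2 * C / (1 - γ) * weightedL1Norm σ (Φ *ᵥ x - bell P r γ (Φ *ᵥ x)) := by ring

/-- under the concentration-coefficient assumption, the `ρ̃_S`-optimal
policy `π̄` satisfies `ρ* − ρ(π̄) ≤ (2C/(1−γ))·‖v − Lv‖_{1,σ}` for all representable `v`. -/
theorem dradp_loss_bound_smooth {S A K : Type*} [Fintype S] [Fintype A] [Fintype K]
    [Nonempty A] [DecidableEq S] [DecidableEq A]
    (P : S → A → S → ℝ) (r : S → A → ℝ) (α : S → ℝ) (γ : ℝ) (Φ : Matrix S K ℝ)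
    (hP : ∀ s a s', 0 ≤ P s a s') (hPsum : ∀ s a, ∑ s', P s a s' = 1)
    (hα : ∀ s, 0 ≤ α s) (hαsum : ∑ s, α s = 1)
    (hγ0 : 0 ≤ γ) (hγ1 : γ < 1)
    (μ : S → ℝ) (hμ0 : ∀ s, 0 ≤ μ s) (hμ1 : ∑ s, μ s = 1)
    (C : ℝ) (hC : 0 < C)
    (hconc : ∀ s a s', P s a s' ≤ C * μ s')
    (σ : S → ℝ) (hσ : σ = fun s => γ * μ s + (1 - γ) * α s)
    (hone : ∃ x : K → ℝ, Φ *ᵥ x = fun _ => (1 : ℝ))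
    (vstar : S → ℝ) (hvstar : bell P r γ vstar = vstar)
    (Pset : Set (S → A → ℝ))
    (hG : greedySet P r γ Φ ⊆ Pset)
    (hR : Pset ⊆ {π | isPolicy π})
    (πb : S → A → ℝ) (hmem : πb ∈ Pset)
    (hopt : ∀ π ∈ Pset, rhoTildeS P r α γ Φ C σ π ≤ rhoTildeS P r α γ Φ C σ πb) :
    ∀ x : K → ℝ,
      (∑ s, α s * vstar s) - ret P r α γ πb
        ≤ (2 * C / (1 - γ)) * ∑ s, σ s * |(Φ *ᵥ x) s - bell P r γ (Φ *ᵥ x) s| := by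
  subst hσ
  exact dradp_loss_bound_smooth_general P r α γ Φ (fun s a => ⟨hP s a, hPsum s a⟩) ⟨hα, hαsum⟩
    hγ0 hγ1 C _ (fun _ => dOcc_le_of_concentration (fun s a => ⟨hP s a, hPsum s a⟩) ⟨hα, hαsum⟩
      hμ1 hγ0 hγ1 hconc) vstar hvstar πb (hR hmem) fun π hπ => hopt π (hG hπ)
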